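/- arXiv:1103.3938 — 2 statements merged into one kernel-verified Lean document; each statement's English description precedes it below -/
import Mathlib

section
/- Let n ≥ 3, let q_n = ((−1)^{n+1} + 2ⁿ)/3, and define the utility vector m on [n+1] by m_i = 2^i for 1 ≤ i ≤ n−2, m_{n−1} = q_n, m_n = 2^{n−1}, m_{n+1} = 2ⁿ. Then all subset sums u(A) = ∑_{i∈A} m_i, A ⊆ [n+1], are pairwise distinct, the order ≼_m on subsets of [n+1] defined by A ≼_m B ⇔ u(A) ≤ u(B) is a comparative probability order, and ≼_m has exactly F_{n+2} flippable pairs, where F denotes the Fibonacci sequence with F₁ = F₂ = 1. -/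
open Finset

/-- The strict part of a (total antisymmetric) order on subsets. -/
def cpLT {n : ℕ} (le : Finset (Fin n) → Finset (Fin n) → Prop)
    (A B : Finset (Fin n)) : Prop :=
  le A B ∧ A ≠ B

/-- `le` is a comparative probability order on `[n]`: a linear (total,
antisymmetric, transitive) order on the powerset of `[n]` with `∅ ≺ A` for
nonempty `A`, satisfying de Finetti's axiom. -/
def IsCPO {n : ℕ} (le : Finset (Fin n) → Finset (Fin n) → Prop) : Prop :=
  (∀ A B, le A B ∨ le B A) ∧
  (∀ A B, le A B → le B A → A = B) ∧
  (∀ A B C, le A B → le B C → le A C) ∧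
  (∀ A : Finset (Fin n), A ≠ ∅ → cpLT le ∅ A) ∧
  (∀ A B C : Finset (Fin n), Disjoint (A ∪ B) C → (le A B ↔ le (A ∪ C) (B ∪ C)))

/-- `(A,B)` is a critical pair: disjoint, `A ≺ B`, and no `C` with `A ≺ C ≺ B`. -/
def Critical {n : ℕ} (le : Finset (Fin n) → Finset (Fin n) → Prop)
    (A B : Finset (Fin n)) : Prop :=
  Disjoint A B ∧ cpLT le A B ∧ ¬ ∃ C, cpLT le A C ∧ cpLT le C B

/-- `(A,B)` is a flippable pair: critical, and for every `D` disjoint from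
`A ∪ B` the pair `(A ∪ D, B ∪ D)` is adjacent. -/
def Flippable {n : ℕ} (le : Finset (Fin n) → Finset (Fin n) → Prop)
    (A B : Finset (Fin n)) : Prop :=
  Critical le A B ∧
  ∀ D : Finset (Fin n), Disjoint D (A ∪ B) →
    ¬ ∃ C, cpLT le (A ∪ D) C ∧ cpLT le C (B ∪ D)

/-- The set of flippable pairs of an order. -/
def FlippablePairs {n : ℕ} (le : Finset (Fin n) → Finset (Fin n) → Prop) :
    Set (Finset (Fin n) × Finset (Fin n)) :=
  {p | Flippable le p.1 p.2}

/-- `le` is (additively) representable by a positive utility vector. -/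
def Representable {n : ℕ} (le : Finset (Fin n) → Finset (Fin n) → Prop) : Prop :=
  ∃ u : Fin n → ℝ, (∀ i, 0 < u i) ∧
    ∀ A B : Finset (Fin n), le A B ↔ ∑ i ∈ A, u i ≤ ∑ i ∈ B, u i

/-- `(X, Y) = (A ∪ D, B ∪ D)` for some `D` disjoint from `A ∪ B`. -/
def FlipRel {n : ℕ} (A B X Y : Finset (Fin n)) : Prop :=
  ∃ D : Finset (Fin n), Disjoint D (A ∪ B) ∧ X = A ∪ D ∧ Y = B ∪ D

/-- The relation obtained from `le` by flipping over the pair `(A,B)`: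
all comparisons between `A ∪ D` and `B ∪ D` (for `D` disjoint from `A ∪ B`)
are reversed, all other comparisons are kept. -/
def flipOrder {n : ℕ} (le : Finset (Fin n) → Finset (Fin n) → Prop)
    (A B : Finset (Fin n)) : Finset (Fin n) → Finset (Fin n) → Prop :=
  fun X Y => (le X Y ∧ ¬ FlipRel A B X Y) ∨ FlipRel A B Y X

/-- Utility (sum of weights) of a subset. -/
def usum {k : ℕ} (m : Fin k → ℕ) (A : Finset (Fin k)) : ℕ := ∑ i ∈ A, m i

/-- The order on subsets induced by a utility vector. -/
def uord {k : ℕ} (m : Fin k → ℕ) : Finset (Fin k) → Finset (Fin k) → Prop :=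
  fun A B => usum m A ≤ usum m B

/-- `qn n = ((−1)^(n+1) + 2^n) / 3` as a natural number. -/
def qn (n : ℕ) : ℕ := if n % 2 = 1 then (2 ^ n + 1) / 3 else (2 ^ n - 1) / 3

/-- The utility vector `m` on `[n+1]` (element `k` corresponds to index `k-1`):
`m_k = 2^k` for `1 ≤ k ≤ n−2`, `m_{n−1} = qn n`, `m_n = 2^(n−1)`, `m_{n+1} = 2^n`. -/
def mvec (n : ℕ) : Fin (n + 1) → ℕ := fun i =>
  if (i : ℕ) + 1 ≤ n - 2 then 2 ^ ((i : ℕ) + 1)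
  else if (i : ℕ) + 1 = n - 1 then qn n
  else if (i : ℕ) + 1 = n then 2 ^ (n - 1)
  else 2 ^ n


/-- Number of signed representations of `N` with weights `w`. -/
def cnt {k : ℕ} (w : Fin k → ℤ) (N : ℤ) : ℕ :=
  (univ.filter (fun y : Fin k → SignType => ∑ i, (y i : ℤ) * w i = N)).card

lemma cnt_neg {k : ℕ} (w : Fin k → ℤ) (N : ℤ) : cnt w (-N) = cnt w N := by
  unfold cnt
  apply Finset.card_bij (fun y _ => -y)
  · intro y hy
    simp only [mem_filter, mem_univ, true_and] at hy ⊢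
    simp [Finset.sum_neg_distrib, hy]
  · intro a _ b _ h
    exact neg_injective h
  · intro b hb
    refine ⟨-b, ?_, by simp⟩
    simp only [mem_filter, mem_univ, true_and] at hb ⊢
    simp [Finset.sum_neg_distrib, hb]

lemma cnt_two {k : ℕ} (w : Fin k → ℤ) (N : ℤ) : cnt (fun i => 2 * w i) (2 * N) = cnt w N := by
  unfold cnt
  congr 1
  ext y
  have : ∑ i, (y i : ℤ) * (2 * w i) = 2 * ∑ i, (y i : ℤ) * w i := by
    rw [Finset.mul_sum]; exact Finset.sum_congr rfl (fun i _ => by ring)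
  simp only [mem_filter, mem_univ, true_and, this]
  omega

lemma cnt_odd {k : ℕ} (w : Fin k → ℤ) (N : ℤ) (h : N % 2 = 1) : cnt (fun i => 2 * w i) N = 0 := by
  unfold cnt
  rw [Finset.card_eq_zero, Finset.filter_eq_empty_iff]
  intro y _
  have : ∑ i, (y i : ℤ) * (2 * w i) = 2 * ∑ i, (y i : ℤ) * w i := by
    rw [Finset.mul_sum]; exact Finset.sum_congr rfl (fun i _ => by ring)
  rw [this]
  omega

lemma cnt_split_aux {k : ℕ} (w : Fin (k + 1) → ℤ) (p : Fin (k + 1)) (N : ℤ) (s : SignType) :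
    (univ.filter (fun y : Fin (k + 1) → SignType =>
      ∑ i, (y i : ℤ) * w i = N ∧ y p = s)).card
      = cnt (fun i => w (p.succAbove i)) (N - s * w p) := by
  unfold cnt
  symm
  apply Finset.card_bij (fun y _ => p.insertNth (α := fun _ => SignType) s y)
  · intro y hy
    simp only [mem_filter, mem_univ, true_and] at hy ⊢
    rw [Fin.sum_univ_succAbove _ p]
    simp [hy]
  · intro a _ b _ h
    exact Fin.insertNth_right_injective (α := fun _ => SignType) s h
  · intro b hb
    simp only [mem_filter, mem_univ, true_and] at hb
    obtain ⟨h1, h2⟩ := hb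
    rw [Fin.sum_univ_succAbove _ p] at h1
    refine ⟨p.removeNth b, ?_, ?_⟩
    · simp only [mem_filter, mem_univ, true_and, Fin.removeNth]
      rw [← h2]; linarith
    · rw [← h2]; simp

lemma cnt_split {k : ℕ} (w : Fin (k + 1) → ℤ) (p : Fin (k + 1)) (N : ℤ) :
    cnt w N = cnt (fun i => w (p.succAbove i)) (N - w p)
      + cnt (fun i => w (p.succAbove i)) N
      + cnt (fun i => w (p.succAbove i)) (N + w p) := by
  have h1 := cnt_split_aux w p N 1
  have h0 := cnt_split_aux w p N 0
  have hm := cnt_split_aux w p N (-1)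
  simp only [SignType.coe_one, SignType.coe_zero, SignType.coe_neg_one, one_mul, zero_mul,
    neg_mul, sub_neg_eq_add, sub_zero] at h1 h0 hm
  rw [← h1, ← h0, ← hm]
  unfold cnt
  rw [← Finset.card_union_of_disjoint, ← Finset.card_union_of_disjoint]
  · congr 1
    ext y
    simp only [mem_filter, mem_univ, true_and, mem_union]
    rcases y p <;> simp
  · rw [Finset.disjoint_left]
    intro y
    simp only [mem_filter, mem_univ, true_and, mem_union]
    rintro (⟨-, h⟩ | ⟨-, h⟩) ⟨-, h'⟩ <;> rw [h] at h' <;> revert h' <;> decide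
  · rw [Finset.disjoint_left]
    intro y
    simp only [mem_filter, mem_univ, true_and]
    rintro ⟨-, h⟩ ⟨-, h'⟩
    rw [h] at h'; revert h'; decide

/-- Binary signed-digit representation count. -/
def rr (k : ℕ) (N : ℤ) : ℕ := cnt (fun i : Fin k => (2 : ℤ) ^ (i : ℕ)) N

lemma rr_split (k : ℕ) (N : ℤ) :
    rr (k + 1) N = cnt (fun i : Fin k => 2 * (2 : ℤ) ^ (i : ℕ)) (N - 1)
      + cnt (fun i : Fin k => 2 * (2 : ℤ) ^ (i : ℕ)) N
      + cnt (fun i : Fin k => 2 * (2 : ℤ) ^ (i : ℕ)) (N + 1) := by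
  unfold rr
  rw [cnt_split _ 0]
  simp [pow_succ']

lemma rr_even (k : ℕ) (N : ℤ) : rr (k + 1) (2 * N) = rr k N := by
  rw [rr_split, cnt_odd _ _ (by omega), cnt_two, cnt_odd _ _ (by omega)]
  simp [rr]

lemma rr_odd (k : ℕ) (N : ℤ) : rr (k + 1) (2 * N + 1) = rr k N + rr k (N + 1) := by
  rw [rr_split, cnt_odd _ (2 * N + 1) (by omega), show 2 * N + 1 - 1 = 2 * N by ring,
    show 2 * N + 1 + 1 = 2 * (N + 1) by ring, cnt_two, cnt_two]
  simp [rr]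

/-- Jacobsthal numbers. -/
def jac : ℕ → ℤ
  | 0 => 0
  | 1 => 1
  | (n + 2) => jac (n + 1) + 2 * jac n

lemma jac_rel (n : ℕ) : jac (n + 1) = 2 * jac n + 1 ∨ jac (n + 1) = 2 * jac n - 1 := by
  induction n with
  | zero => left; simp [jac]
  | succ n ih => simp only [jac]; omega

lemma jac_closed (n : ℕ) : 3 * jac n = 2 ^ n - (-1) ^ n := by
  induction n using Nat.strong_induction_on with
  | _ n ih =>
    match n with
    | 0 => simp [jac]
    | 1 => simp [jac]
    | (n + 2) =>
      have h1 := ih (n + 1) (by omega)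
      have h2 := ih n (by omega)
      simp only [jac]
      rw [mul_add, h1, mul_left_comm, h2]
      ring

lemma qn_eq_jac (n : ℕ) : (qn n : ℤ) = jac n := by
  have h := jac_closed n
  have hp : 1 ≤ 2 ^ n := Nat.one_le_two_pow
  have hc : ((2 ^ n : ℕ) : ℤ) = 2 ^ n := by push_cast; rfl
  rw [← hc] at h
  unfold qn
  split_ifs with h1
  · rw [Odd.neg_one_pow (Nat.odd_iff.mpr h1)] at h
    omega
  · rw [Even.neg_one_pow (Nat.even_iff.mpr (by omega))] at h
    omega

lemma rr_zero (k : ℕ) : rr k 0 = 1 := by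
  induction k with
  | zero => simp [rr, cnt]
  | succ k ih => have := rr_even k 0; rw [mul_zero] at this; rw [this, ih]

lemma rr_jac (n : ℕ) : rr (n + 1) (jac n) = Nat.fib (n + 2) := by
  induction n using Nat.strong_induction_on with
  | _ n ih =>
    match n with
    | 0 => simp [jac, rr_zero]
    | 1 =>
      have h := rr_odd 1 0
      have h' := rr_odd 0 0
      have h'' : rr 0 (0 + 1) = 0 := by simp [rr, cnt]
      rw [h'', rr_zero] at h'
      rw [rr_zero] at h
      simp only [mul_zero, zero_add] at h h'
      simp only [jac, h, h']
      rfl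
    | (n + 2) =>
      have h1 := ih (n + 1) (by omega)
      have h2 := ih n (by omega)
      rw [← rr_even] at h2
      have e : rr (n + 2 + 1) (jac (n + 2)) = rr (n + 2) (2 * jac n) + rr (n + 2) (jac (n + 1)) := by
        simp only [jac]
        rcases jac_rel n with h | h
        · rw [h, ← rr_odd]; congr 1; ring
        · rw [show jac (n + 1) + 2 * jac n = 2 * jac (n + 1) + 1 by omega, rr_odd, add_comm]
          congr 2; omega
      rw [e, h1, h2, Nat.fib_add_two (n := n + 2)]

lemma att (k : ℕ) : ∀ N < 2 ^ k, ∃ f : Fin k → Bool,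
    ∑ i, (if f i then 2 ^ (i : ℕ) else 0) = N := by
  induction k with
  | zero => intro N hN; exact ⟨fun _ => true, by simp at hN; simp [hN]⟩
  | succ k ih =>
    intro N hN
    obtain ⟨f, hf⟩ := ih (N / 2) (by rw [pow_succ] at hN; omega)
    refine ⟨Fin.cons (decide (N % 2 = 1)) f, ?_⟩
    rw [Fin.sum_univ_succ]
    have : ∑ i : Fin k, (if f i then 2 ^ ((i : ℕ) + 1) else 0) = 2 * (N / 2) := by
      rw [← hf, Finset.mul_sum]
      exact Finset.sum_congr rfl (fun i _ => by split_ifs <;> ring)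
    simp only [Fin.cons_zero, Fin.cons_succ, Fin.val_succ, this]
    simp
    split_ifs <;> omega

lemma bin_inj (k : ℕ) : ∀ f g : Fin k → Bool,
    ∑ i, (if f i then 2 ^ (i : ℕ) else 0) = ∑ i, (if g i then 2 ^ (i : ℕ) else 0) → f = g := by
  induction k with
  | zero => intro f g _; exact Subsingleton.elim _ _
  | succ k ih =>
    intro f g h
    have key : ∀ f : Fin (k + 1) → Bool, ∑ i, (if f i then 2 ^ (i : ℕ) else 0)
        = (if f 0 then 1 else 0) + 2 * ∑ i : Fin k, (if f i.succ then 2 ^ (i : ℕ) else 0) := by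
      intro f
      rw [Fin.sum_univ_succ, Finset.mul_sum]
      congr 1
      exact Finset.sum_congr rfl (fun i _ => by simp only [Fin.val_succ]; split_ifs <;> ring)
    rw [key, key] at h
    have h0 : f 0 = g 0 := by
      revert h
      rcases f 0 <;> rcases g 0 <;> simp <;> omega
    rw [h0] at h
    have hs := ih (fun i => f i.succ) (fun i => g i.succ) (by omega)
    funext i
    refine Fin.cases h0 (fun j => congrFun hs j) i

lemma bin_lt (k : ℕ) : ∀ f : Fin k → Bool,
    ∑ i, (if f i then 2 ^ (i : ℕ) else 0) < 2 ^ k := by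
  induction k with
  | zero => intro f; simp
  | succ k ih =>
    intro f
    rw [Fin.sum_univ_castSucc]
    have := ih (fun i => f i.castSucc)
    simp only [Fin.val_castSucc, Fin.val_last]
    rw [pow_succ]
    split_ifs <;> omega

/-- The position of the odd weight. -/
def pp (n : ℕ) : Fin (n + 1) := ⟨n - 2, by omega⟩

lemma mvec_pp {n : ℕ} (hn : 3 ≤ n) : mvec n (pp n) = qn n := by
  have h : ((pp n : Fin (n + 1)) : ℕ) = n - 2 := rfl
  unfold mvec
  rw [if_neg (by omega), if_pos (by omega)]

lemma mvec_succAbove {n : ℕ} (hn : 3 ≤ n) (i : Fin n) :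
    mvec n ((pp n).succAbove i) = 2 * 2 ^ (i : ℕ) := by
  have hi := i.2
  simp only [mvec]
  rw [← pow_succ']
  by_cases h : (i : ℕ) < n - 2
  · rw [Fin.succAbove_of_castSucc_lt _ _ (by simpa [pp, Fin.lt_def] using h)]
    simp only [Fin.val_castSucc]
    rw [if_pos (by omega)]
  · rw [Fin.succAbove_of_le_castSucc _ _ (by simpa [pp, Fin.le_def] using h)]
    simp only [Fin.val_succ]
    rw [if_neg (by omega), if_neg (by omega)]
    split_ifs with h2
    · congr 1; omega
    · congr 1; omega

/-- Binary part of a set. -/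
def bp {n : ℕ} (A : Finset (Fin (n + 1))) : Fin n → Bool :=
  fun i => decide ((pp n).succAbove i ∈ A)

/-- Value of a binary string. -/
def bv {n : ℕ} (f : Fin n → Bool) : ℕ := ∑ i, (if f i then 2 ^ (i : ℕ) else 0)

lemma usum_eq {n : ℕ} (hn : 3 ≤ n) (A : Finset (Fin (n + 1))) :
    usum (mvec n) A = (if pp n ∈ A then qn n else 0) + 2 * bv (bp A) := by
  have h : usum (mvec n) A = ∑ i, if i ∈ A then mvec n i else 0 := by
    simp [usum]
  rw [h, Fin.sum_univ_succAbove _ (pp n), mvec_pp hn, bv, Finset.mul_sum]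
  congr 1
  refine Finset.sum_congr rfl (fun i _ => ?_)
  rw [mvec_succAbove hn]
  simp [bp]

lemma qn_odd {n : ℕ} (hn : 3 ≤ n) : qn n % 2 = 1 := by
  have h := qn_eq_jac n
  obtain ⟨k, rfl⟩ : ∃ k, n = k + 1 := ⟨n - 1, by omega⟩
  have := jac_rel k
  omega

lemma qn_bound {n : ℕ} : 3 * qn n ≤ 2 ^ n + 1 := by
  have hp : 1 ≤ 2 ^ n := Nat.one_le_two_pow
  unfold qn
  split_ifs <;> omega

lemma att_set {n : ℕ} (hn : 3 ≤ n) (b : Bool) (N : ℕ) (hN : N < 2 ^ n) :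
    ∃ A : Finset (Fin (n + 1)), usum (mvec n) A = (if b then qn n else 0) + 2 * N := by
  obtain ⟨f, hf⟩ := att n N hN
  refine ⟨univ.filter (fun i => (pp n).insertNth (α := fun _ => Bool) b f i = true), ?_⟩
  rw [usum_eq hn]
  have : bp (univ.filter (fun i => (pp n).insertNth (α := fun _ => Bool) b f i = true)) = f := by
    funext i
    simp [bp]
  rw [this]
  simp [bv, hf]

lemma usum_inj {n : ℕ} (hn : 3 ≤ n) (A B : Finset (Fin (n + 1)))
    (h : usum (mvec n) A = usum (mvec n) B) : A = B := by
  rw [usum_eq hn, usum_eq hn] at h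
  have ho := qn_odd hn
  have hp : pp n ∈ A ↔ pp n ∈ B := by
    split_ifs at h <;> first | tauto | omega
  have hb : bv (bp A) = bv (bp B) := by
    simp only [hp] at h; omega
  have hb' := bin_inj n _ _ hb
  ext i
  rcases Fin.eq_self_or_eq_succAbove (pp n) i with rfl | ⟨j, rfl⟩
  · exact hp
  · simpa [bp] using congrFun hb' j

lemma usum_union {k : ℕ} (m : Fin k → ℕ) {A C : Finset (Fin k)} (h : Disjoint A C) :
    usum m (A ∪ C) = usum m A + usum m C := Finset.sum_union h

lemma cpLT_iff {n : ℕ} (hn : 3 ≤ n) (A B : Finset (Fin (n + 1))) :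
    cpLT (uord (mvec n)) A B ↔ usum (mvec n) A < usum (mvec n) B := by
  unfold cpLT uord
  constructor
  · rintro ⟨h1, h2⟩
    exact lt_of_le_of_ne h1 (fun h => h2 (usum_inj hn _ _ h))
  · intro h
    exact ⟨h.le, fun e => by rw [e] at h; exact lt_irrefl _ h⟩

lemma isCPO {n : ℕ} (hn : 3 ≤ n) : IsCPO (uord (mvec n)) := by
  refine ⟨fun A B => le_total _ _, fun A B h1 h2 => usum_inj hn _ _ (le_antisymm h1 h2),
    fun A B C h1 h2 => le_trans h1 h2, ?_, ?_⟩
  · intro A hA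
    refine ⟨by simp [uord, usum], fun h => hA h.symm⟩
  · intro A B C h
    rw [Finset.disjoint_union_left] at h
    unfold uord
    rw [usum_union _ h.1, usum_union _ h.2]
    omega

lemma no_between {n : ℕ} (hn : 3 ≤ n) (x : ℕ)
    (h : (x % 2 = 0 ∧ x < 2 * 2 ^ n) ∨ (x % 2 = 1 ∧ qn n ≤ x ∧ x < qn n + 2 * 2 ^ n)) :
    ∃ C, usum (mvec n) C = x := by
  have ho := qn_odd hn
  rcases h with ⟨h1, h2⟩ | ⟨h1, h2, h3⟩
  · obtain ⟨A, hA⟩ := att_set hn false (x / 2) (by omega)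
    exact ⟨A, by rw [hA]; simp; omega⟩
  · obtain ⟨A, hA⟩ := att_set hn true ((x - qn n) / 2) (by omega)
    exact ⟨A, by rw [hA]; simp; omega⟩

lemma flippable_iff {n : ℕ} (hn : 3 ≤ n) (A B : Finset (Fin (n + 1))) :
    Flippable (uord (mvec n)) A B ↔
      Disjoint A B ∧ usum (mvec n) B = usum (mvec n) A + 1 := by
  have ho := qn_odd hn
  have hq := qn_bound (n := n)
  have hpow : 8 ≤ 2 ^ n := by
    calc 8 = 2 ^ 3 := by norm_num
      _ ≤ 2 ^ n := Nat.pow_le_pow_right (by norm_num) hn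
  unfold Flippable Critical
  simp only [cpLT_iff hn]
  constructor
  · rintro ⟨⟨hd, hlt, hc⟩, hD⟩
    refine ⟨hd, ?_⟩
    by_contra hne
    have hA := usum_eq hn A
    have hB := usum_eq hn B
    have bA : bv (bp A) < 2 ^ n := bin_lt n _
    have bB : bv (bp B) < 2 ^ n := bin_lt n _
    have hc' : ∀ x, usum (mvec n) A < x → x < usum (mvec n) B →
        ¬ ((x % 2 = 0 ∧ x < 2 * 2 ^ n) ∨ (x % 2 = 1 ∧ qn n ≤ x ∧ x < qn n + 2 * 2 ^ n)) := by
      intro x h1 h2 h3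
      obtain ⟨C, hC⟩ := no_between hn x h3
      exact hc ⟨C, by omega, by omega⟩
    have hpd : ¬ (pp n ∈ A ∧ pp n ∈ B) := fun h => Finset.disjoint_left.mp hd h.1 h.2
    have c1 := hc' (usum (mvec n) A + 1) (by omega) (by omega)
    by_cases h2 : usum (mvec n) B = usum (mvec n) A + 2
    · have hpA : pp n ∉ A := by
        intro h
        have hB' : pp n ∉ B := fun h' => hpd ⟨h, h'⟩
        simp only [h, hB', if_true, if_false] at hA hB
        omega
      have hpB : pp n ∉ B := by
        intro h
        simp only [h, hpA, if_true, if_false] at hA hB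
        omega
      simp only [hpA, hpB, if_false] at hA hB
      have hdA : Disjoint A {pp n} := by simpa using hpA
      have hdB : Disjoint B {pp n} := by simpa using hpB
      have hs : usum (mvec n) {pp n} = qn n := by simp [usum, mvec_pp hn]
      obtain ⟨C, hC⟩ := no_between hn (usum (mvec n) A + qn n + 1) (by omega)
      refine hD {pp n} (by simp [hpA, hpB]) ⟨C, ?_, ?_⟩
      · rw [usum_union _ hdA]; omega
      · rw [usum_union _ hdB]; omega
    · have c2 := hc' (usum (mvec n) A + 2) (by omega) (by omega)
      split_ifs at hA hB <;> omega
  · rintro ⟨hd, h⟩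
    refine ⟨⟨hd, by omega, ?_⟩, ?_⟩
    · rintro ⟨C, h1, h2⟩; omega
    · rintro D hD ⟨C, h1, h2⟩
      rw [Finset.disjoint_union_right] at hD
      rw [usum_union _ hD.1.symm] at h1
      rw [usum_union _ hD.2.symm] at h2
      omega

lemma flip_card {n : ℕ} (hn : 3 ≤ n) :
    (FlippablePairs (uord (mvec n))).ncard = cnt (fun i => (mvec n i : ℤ)) 1 := by
  have hval : ∀ y : Fin (n + 1) → SignType, ∑ i, (y i : ℤ) * (mvec n i : ℤ)
      = (usum (mvec n) (univ.filter (fun i => y i = 1)) : ℤ)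
        - usum (mvec n) (univ.filter (fun i => y i = -1)) := by
    intro y
    unfold usum
    rw [Finset.sum_filter, Finset.sum_filter]
    push_cast
    rw [← Finset.sum_sub_distrib]
    refine Finset.sum_congr rfl (fun i _ => ?_)
    rcases y i <;> simp
  let φ : (Fin (n + 1) → SignType) → Finset (Fin (n + 1)) × Finset (Fin (n + 1)) :=
    fun y => (univ.filter (fun i => y i = -1), univ.filter (fun i => y i = 1))
  have hφ : Function.Injective φ := by
    intro y z h
    simp only [φ, Prod.mk.injEq, Finset.ext_iff, mem_filter, mem_univ, true_and] at h
    funext i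
    have h1 := h.1 i
    have h2 := h.2 i
    revert h1 h2
    generalize y i = a
    generalize z i = b
    revert a b
    decide
  have : FlippablePairs (uord (mvec n)) = ((univ.filter (fun y : Fin (n + 1) → SignType =>
      ∑ i, (y i : ℤ) * (mvec n i : ℤ) = 1)).image φ : Set _) := by
    ext ⟨A, B⟩
    simp only [FlippablePairs, Set.mem_ofPred_eq, flippable_iff hn, Finset.coe_image,
      Set.mem_image, Finset.mem_coe, mem_filter, mem_univ, true_and]
    constructor
    · rintro ⟨hd, h⟩
      have hd' : ∀ i, i ∈ A → i ∉ B := fun i hi => Finset.disjoint_left.mp hd hi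
      have hy : φ (fun i => if i ∈ A then -1 else if i ∈ B then 1 else 0) = (A, B) := by
        simp only [φ, Prod.mk.injEq]
        constructor
        · ext i
          simp only [mem_filter, mem_univ, true_and]
          split_ifs <;> simp_all
        · ext i
          have := hd' i
          simp only [mem_filter, mem_univ, true_and]
          split_ifs <;> simp_all
      refine ⟨_, ?_, hy⟩
      rw [hval]
      have e1 := congrArg Prod.fst hy
      have e2 := congrArg Prod.snd hy
      simp only [φ] at e1 e2
      rw [e1, e2, h]
      push_cast; ring
    · rintro ⟨y, h, he⟩
      have e1 := congrArg Prod.fst he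
      have e2 := congrArg Prod.snd he
      simp only [φ] at e1 e2
      rw [hval, e1, e2] at h
      refine ⟨?_, by omega⟩
      rw [← e1, ← e2, Finset.disjoint_left]
      intro i
      simp only [mem_filter, mem_univ, true_and]
      intro h1 h2
      rw [h1] at h2
      revert h2; decide
  rw [this, Set.ncard_coe_finset, Finset.card_image_of_injective _ hφ]
  rfl

lemma cnt_mvec {n : ℕ} (hn : 3 ≤ n) :
    cnt (fun i => (mvec n i : ℤ)) 1 = rr (n + 1) (qn n) := by
  have ho := qn_odd hn
  rw [cnt_split _ (pp n), rr_split]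
  simp only [mvec_pp hn, mvec_succAbove hn]
  push_cast
  rw [cnt_odd _ 1 (by norm_num), cnt_odd _ (qn n : ℤ) (by omega), ← cnt_neg _ (1 - (qn n : ℤ)),
    neg_sub, add_comm (1 : ℤ)]

/-- For `n ≥ 3`, the utility vector `mvec n` on `[n+1]` has pairwise distinct
subset sums, induces a comparative probability order, and this order has exactly
`F_{n+2}` flippable pairs. -/
theorem stmt4 {n : ℕ} (hn : 3 ≤ n) :
    (∀ A B : Finset (Fin (n + 1)), usum (mvec n) A = usum (mvec n) B → A = B) ∧
    IsCPO (uord (mvec n)) ∧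
    (FlippablePairs (uord (mvec n))).ncard = Nat.fib (n + 2) := by
  exact ⟨usum_inj hn, isCPO hn, by rw [flip_card hn, cnt_mvec hn, qn_eq_jac, rr_jac]⟩
end

section
/- Let q be an odd positive integer with q < 2ⁿ, let j be the integer with 2^{j−1} ≤ q < 2^j, and define the utility vector m on [n+1] by m_i = 2^i for 1 ≤ i ≤ j−1, m_j = q, and m_i = 2^{i−1} for j+1 ≤ i ≤ n+1, with u(A) = ∑_{i∈A} m_i and induced order ≼_m. Let (A,B) be a critical pair for ≼_m. Then the following are equivalent: (a) (A,B) is flippable; (b) exactly one of A and B contains j; (c) u(B) − u(A) = 1. -/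
open Finset

/-- The utility vector on `[n+1]` (element `k` corresponds to index `k-1`):
`m_k = 2^k` for `k < j`, `m_j = q`, and `m_k = 2^(k-1)` for `k > j`. -/
def mq (n q j : ℕ) : Fin (n + 1) → ℕ := fun i =>
  if (i : ℕ) + 1 < j then 2 ^ ((i : ℕ) + 1)
  else if (i : ℕ) + 1 = j then q
  else 2 ^ (i : ℕ)

/-- The number coded by the membership pattern of `S` outside of `J`. -/
def codeVec {n : ℕ} (J : Fin (n + 1)) (S : Finset (Fin (n + 1))) : Fin n → Fin 2 :=
  fun k => if J.succAbove k ∈ S then 1 else 0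

lemma mq_self {n q j : ℕ} (J : Fin (n + 1)) (hJ : (J : ℕ) + 1 = j) : mq n q j J = q := by
  simp [mq, hJ]

lemma mq_succAbove {n q j : ℕ} (J : Fin (n + 1)) (hJ : (J : ℕ) + 1 = j) (k : Fin n) :
    mq n q j (J.succAbove k) = 2 * 2 ^ (k : ℕ) := by
  rcases lt_or_ge (k : ℕ) (J : ℕ) with h | h
  · rw [Fin.succAbove_of_castSucc_lt _ _ (by simpa [Fin.lt_def] using h)]
    have : (k : ℕ) + 1 < j := by omega
    simp [mq, this, pow_succ, mul_comm]
  · rw [Fin.succAbove_of_le_castSucc _ _ (by simpa [Fin.le_def] using h)]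
    have h1 : ¬ (k : ℕ) + 1 + 1 < j := by omega
    have h2 : ¬ (k : ℕ) + 1 + 1 = j := by omega
    simp [mq, h1, h2, pow_succ, mul_comm]

lemma usum_eq_s8 {n q j : ℕ} (J : Fin (n + 1)) (hJ : (J : ℕ) + 1 = j)
    (S : Finset (Fin (n + 1))) :
    usum (mq n q j) S = (if J ∈ S then q else 0)
      + 2 * (finFunctionFinEquiv (codeVec J S) : Fin (2 ^ n)).val := by
  have h1 : usum (mq n q j) S = ∑ i, if i ∈ S then mq n q j i else 0 := by
    simp [usum]
  rw [h1, Fin.sum_univ_succAbove _ J, mq_self J hJ, finFunctionFinEquiv_apply, Finset.mul_sum]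
  congr 1
  apply Finset.sum_congr rfl
  intro k _
  rw [mq_succAbove J hJ]
  by_cases h : J.succAbove k ∈ S <;> simp [codeVec, h]

lemma usum_inj_s8 {n q j : ℕ} (hodd : Odd q) (J : Fin (n + 1)) (hJ : (J : ℕ) + 1 = j)
    (S T : Finset (Fin (n + 1))) (h : usum (mq n q j) S = usum (mq n q j) T) : S = T := by
  rw [usum_eq_s8 J hJ, usum_eq_s8 J hJ] at h
  obtain ⟨r, hr⟩ := hodd
  have hJJ : J ∈ S ↔ J ∈ T := by
    split_ifs at h <;> first | omega | tauto
  have hv : (finFunctionFinEquiv (codeVec J S) : Fin (2 ^ n)).val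
      = (finFunctionFinEquiv (codeVec J T) : Fin (2 ^ n)).val := by
    split_ifs at h <;> omega
  have hc : codeVec J S = codeVec J T := finFunctionFinEquiv.injective (Fin.ext hv)
  ext i
  rcases Fin.eq_self_or_eq_succAbove J i with rfl | ⟨k, rfl⟩
  · exact hJJ
  · have := congrFun hc k
    unfold codeVec at this
    split_ifs at this <;> simp_all

lemma usum_surj {n q j : ℕ} (J : Fin (n + 1)) (hJ : (J : ℕ) + 1 = j)
    (v : ℕ) (hv : v < 2 ^ n) (P : Prop) [Decidable P] :
    ∃ S : Finset (Fin (n + 1)), usum (mq n q j) S = (if P then q else 0) + 2 * v := by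
  obtain ⟨f, hf⟩ := (finFunctionFinEquiv (m := 2) (n := n)).surjective ⟨v, hv⟩
  let S : Finset (Fin (n + 1)) :=
    univ.filter (fun i => (i = J ∧ P) ∨ ∃ k, i = J.succAbove k ∧ f k = 1)
  have h1 : J ∈ S ↔ P := by
    simp [S, (Fin.succAbove_ne J _).symm]
  have h2 : codeVec J S = f := by
    funext k
    have : J.succAbove k ∈ S ↔ f k = 1 := by
      simp [S, Fin.succAbove_ne J _]
    unfold codeVec
    split_ifs with h
    · exact (this.1 h).symm
    · have := mt this.2 h
      omega
  refine ⟨S, ?_⟩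
  rw [usum_eq_s8 J hJ, h2, hf]
  simp [h1]

/-- For a critical pair `(A,B)` of `≼_{mq n q j}` the following are equivalent:
(a) `(A,B)` is flippable; (b) exactly one of `A`, `B` contains the element `j`;
(c) `u(B) − u(A) = 1`. -/
theorem stmt8 {n q j : ℕ} (hq0 : 0 < q) (hodd : Odd q) (hqn : q < 2 ^ n)
    (hj1 : 2 ^ (j - 1) ≤ q) (hj2 : q < 2 ^ j)
    (A B : Finset (Fin (n + 1))) (hcrit : Critical (uord (mq n q j)) A B) :
    (Flippable (uord (mq n q j)) A B ↔
      Xor' (∃ i ∈ A, (i : ℕ) + 1 = j) (∃ i ∈ B, (i : ℕ) + 1 = j)) ∧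
    (Flippable (uord (mq n q j)) A B ↔
      usum (mq n q j) B = usum (mq n q j) A + 1) := by
  have hj0 : j ≠ 0 := by
    rintro rfl
    simp at hj2
    omega
  have hjn : j - 1 < n := (Nat.pow_lt_pow_iff_right (by norm_num : 1 < 2)).1 (hj1.trans_lt hqn)
  obtain ⟨J, hJ⟩ : ∃ J : Fin (n + 1), (J : ℕ) + 1 = j := ⟨⟨j - 1, by omega⟩, by simp; omega⟩
  have hex : ∀ S : Finset (Fin (n + 1)), (∃ i ∈ S, (i : ℕ) + 1 = j) ↔ J ∈ S := by
    intro S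
    constructor
    · rintro ⟨i, hi, h⟩
      have : i = J := Fin.ext (by omega)
      exact this ▸ hi
    · exact fun h => ⟨J, h, hJ⟩
  rw [hex, hex]
  have hlt : ∀ S T, cpLT (uord (mq n q j)) S T ↔ usum (mq n q j) S < usum (mq n q j) T := by
    intro S T
    constructor
    · rintro ⟨h1, h2⟩
      exact lt_of_le_of_ne h1 (fun h => h2 (usum_inj_s8 hodd J hJ S T h))
    · intro h
      exact ⟨h.le, by rintro rfl; exact lt_irrefl _ h⟩
  obtain ⟨hdis, hAB, hno⟩ := id hcrit
  simp only [hlt, not_exists, not_and, not_lt] at hAB hno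
  have hval : ∀ S : Finset (Fin (n + 1)), ∃ v < 2 ^ n,
      usum (mq n q j) S = (if J ∈ S then q else 0) + 2 * v :=
    fun S => ⟨_, (finFunctionFinEquiv (codeVec J S) : Fin (2 ^ n)).2, usum_eq_s8 J hJ S⟩
  have hE : ∀ v < 2 ^ n, usum (mq n q j) A < 2 * v → usum (mq n q j) B ≤ 2 * v := by
    intro v hv h
    obtain ⟨S, hS⟩ := usum_surj (q := q) J hJ v hv False
    have := hno S
    simp at hS
    omega
  have hO : ∀ v < 2 ^ n, usum (mq n q j) A < q + 2 * v → usum (mq n q j) B ≤ q + 2 * v := by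
    intro v hv h
    obtain ⟨S, hS⟩ := usum_surj (q := q) J hJ v hv True
    have := hno S
    simp at hS
    omega
  have hnb : J ∈ A → J ∉ B := fun h1 h2 => Finset.disjoint_left.1 hdis h1 h2
  obtain ⟨a, ha, hA⟩ := hval A
  obtain ⟨b, hb, hB⟩ := hval B
  obtain ⟨r, hr⟩ := id hodd
  have hbc : Xor' (J ∈ A) (J ∈ B) ↔ usum (mq n q j) B = usum (mq n q j) A + 1 := by
    have e1 := hE (a + 1)
    have e2 := hO (a + 1)
    have e3 := hO (a - r)
    have hx : Xor' (J ∈ A) (J ∈ B) ↔ (J ∈ A ∧ J ∉ B) ∨ (J ∈ B ∧ J ∉ A) := Iff.rfl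
    rw [hx]
    clear hx hcrit hno hval hE hO hex hlt hdis
    generalize usum (mq n q j) A = x at *
    generalize usum (mq n q j) B = y at *
    by_cases h1 : J ∈ A
    · have h2 := hnb h1
      simp only [h1, h2, if_true, if_false] at hA hB
      refine ⟨fun _ => by omega, fun _ => Or.inl ⟨h1, h2⟩⟩
    · by_cases h2 : J ∈ B
      · simp only [h1, h2, if_true, if_false] at hA hB
        refine ⟨fun _ => by omega, fun _ => Or.inr ⟨h2, h1⟩⟩
      · simp only [h1, h2, if_false] at hA hB
        refine ⟨fun h => by tauto, fun h => by omega⟩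
  have hac : Flippable (uord (mq n q j)) A B ↔
      usum (mq n q j) B = usum (mq n q j) A + 1 := by
    have hD : ∀ S D : Finset (Fin (n + 1)), Disjoint S D →
        usum (mq n q j) (S ∪ D) = usum (mq n q j) S + usum (mq n q j) D :=
      fun S D h => Finset.sum_union h
    constructor
    · rintro ⟨-, h⟩
      by_contra hc
      have hx := mt hbc.1 hc
      have h1 : J ∉ A := fun h1 => hx (Or.inl ⟨h1, hnb h1⟩)
      have h2 : J ∉ B := fun h2 => hx (Or.inr ⟨h2, h1⟩)
      simp only [h1, h2, if_false] at hA hB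
      have e3 := hO (a - r)
      have hu : usum (mq n q j) {J} = q := by simp [usum, mq_self J hJ]
      obtain ⟨S, hS⟩ := usum_surj (q := q) J hJ (a + r + 1) (by omega) False
      simp only [if_false] at hS
      apply h {J} (by simp [h1, h2])
      refine ⟨S, ?_, ?_⟩
      · rw [hlt, hD _ _ (by simpa using h1), hu]
        omega
      · rw [hlt, hD _ _ (by simpa using h2), hu]
        omega
    · intro h
      refine ⟨hcrit, ?_⟩
      rintro D hDd ⟨C, hC1, hC2⟩
      rw [Finset.disjoint_union_right] at hDd
      rw [hlt, hD _ _ hDd.1.symm] at hC1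
      rw [hlt, hD _ _ hDd.2.symm] at hC2
      omega
  exact ⟨hac.trans hbc.symm, hac⟩
end
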